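/- arXiv:2005.14353 — 2 statements merged into one kernel-verified Lean document; each statement's English description precedes it below -/
import Mathlib

section
/- Let A be a real m×n matrix and b ∈ ℝ^m such that the polyhedron P = {d ∈ ℝ^n : A·d ≤ b} is nonempty. Let η₀ ∈ ℝ^p, let H be a real p×n matrix, and let u ∈ ℝ^p, v ∈ ℝ^n, h ∈ ℝ. Then the robust constraint u·(η₀ + H·d) + v·d ≤ h holds for every d ∈ P if and only if there exists λ ∈ ℝ^m with λ ≥ 0, Aᵀ·λ = Hᵀ·u + v, and u·η₀ + b·λ ≤ h. -/
/-!
The robust constraint is an affine inequality in `d`, so the claim is the affine form of Farkas'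
lemma. On a nonempty polyhedron an affine inequality `c x ≤ β` can be homogenized to
`c x ≤ β t` on pairs `(x, t)` with `0 ≤ t`: for `t > 0` rescale, and for `t = 0` move arbitrarily
far from a feasible point along the recession direction `x`. The homogeneous Farkas lemma then
writes `β t - c x` as a conical combination of the homogenized constraints and of `t`; the
multiplier of `t` is the slack in the bound on the right-hand sides.

The homogeneous lemma holds for finitely many functionals over any ordered field, by eliminating one
constraint `f` at a time. If `f` cannot be dropped, some `x₀` satisfies the other constraints while
`f x₀` and `c x₀` are negative. Pulling the other constraints and `c` back along a scaled projection
onto `ker f` in the direction `x₀` gives a system with one functional fewer, and undoing the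
pullback costs only a nonnegative multiple of `f`.
-/

open Matrix

section OrderedSemiring

open Module PointedCone

theorem mem_hull_range_iff_exists_nonneg {R M ι : Type*} [Semiring R] [PartialOrder R]
    [IsOrderedRing R] [AddCommMonoid M] [Module R M] [Fintype ι] {a : ι → M} {x : M} :
    x ∈ hull R (Set.range a) ↔ ∃ l : ι → R, 0 ≤ l ∧ ∑ i, l i • a i = x := by
  rw [Submodule.mem_span_range_iff_exists_fun]
  constructor
  · rintro ⟨l, hl⟩
    exact ⟨fun i => l i, fun i => (l i).2, hl⟩
  · rintro ⟨l, hl, hx⟩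
    exact ⟨fun i => ⟨l i, hl i⟩, hx⟩

theorem apply_nonneg_of_mem_hull {R M : Type*} [CommSemiring R] [PartialOrder R] [IsOrderedRing R]
    [AddCommMonoid M] [Module R M] {S : Set (Dual R M)} {f : Dual R M} {x : M}
    (hS : ∀ g ∈ S, 0 ≤ g x) (hf : f ∈ hull R S) : 0 ≤ f x := by
  have hx : x ∈ dual LinearMap.id S := hS
  rw [← dual_hull] at hx
  exact hx hf

end OrderedSemiring

section CommRing

open Module

variable {R M : Type*} [CommRing R] [AddCommGroup M] [Module R M]

/-- The projection onto `ker f` along `x₀`, scaled by `-f x₀` so that no division occurs. -/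
def scaledKerProj (f : Dual R M) (x₀ : M) : M →ₗ[R] M :=
  f.smulRight x₀ - f x₀ • LinearMap.id

theorem scaledKerProj_apply (f : Dual R M) (x₀ x : M) :
    scaledKerProj f x₀ x = f x • x₀ - f x₀ • x := rfl

theorem apply_scaledKerProj_self (f : Dual R M) (x₀ x : M) : f (scaledKerProj f x₀ x) = 0 := by
  simp [scaledKerProj_apply, mul_comm]

theorem dualMap_scaledKerProj_apply (f g : Dual R M) (x₀ : M) :
    (scaledKerProj f x₀).dualMap g = g x₀ • f - f x₀ • g := by
  ext x
  simp [scaledKerProj_apply, mul_comm]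

/-- The homogenization `(x, t) ↦ β t - f x` of the affine inequality `f x ≤ β`, oriented so that
the inequality reads `0 ≤ homogenize f β (x, 1)`. -/
def homogenize (f : Dual R M) (β : R) : Dual R (M × R) :=
  β • LinearMap.snd R M R - f ∘ₗ LinearMap.fst R M R

@[simp]
theorem homogenize_apply (f : Dual R M) (β : R) (z : M × R) :
    homogenize f β z = β * z.2 - f z.1 := rfl

end CommRing

section Farkas

open Module PointedCone

variable {𝕜 : Type*} [Field 𝕜] [LinearOrder 𝕜] [IsStrictOrderedRing 𝕜]
variable {V : Type*} [AddCommGroup V] [Module 𝕜 V]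
variable {ι : Type*}

theorem mem_hull_insert_of_dualMap_mem_hull {S : Set (Dual 𝕜 V)} {f c : Dual 𝕜 V} {x₀ : V}
    (hS : ∀ g ∈ S, 0 ≤ g x₀) (hf : f x₀ < 0) (hc : c x₀ ≤ 0)
    (hmem : (scaledKerProj f x₀).dualMap c ∈ hull 𝕜 ((scaledKerProj f x₀).dualMap '' S)) :
    c ∈ hull 𝕜 (insert f S) := by
  obtain ⟨g, hg, hgc⟩ : ∃ g ∈ hull 𝕜 S,
      (scaledKerProj f x₀).dualMap g = (scaledKerProj f x₀).dualMap c := by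
    rwa [← PointedCone.mem_map, PointedCone.map, Submodule.map_span]
  -- Solving `g x₀ • f - f x₀ • g = c x₀ • f - f x₀ • c` for `c` gives this multiplier of `f`.
  have hcoeff : 0 ≤ (c x₀ - g x₀) / f x₀ :=
    div_nonneg_of_nonpos (sub_nonpos.2 (hc.trans (apply_nonneg_of_mem_hull hS hg))) hf.le
  refine Submodule.mem_span_insert.2 ⟨⟨_, hcoeff⟩, g, hg, ?_⟩
  ext x
  have hx := LinearMap.congr_fun hgc x
  simp only [dualMap_scaledKerProj_apply, LinearMap.sub_apply, LinearMap.smul_apply,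
    smul_eq_mul] at hx
  simp only [Nonneg.mk_smul, LinearMap.add_apply, LinearMap.smul_apply, smul_eq_mul]
  field_simp [hf.ne]
  linarith

theorem mem_hull_image_of_forall_nonneg (a : ι → Dual 𝕜 V) (s : Finset ι) (c : Dual 𝕜 V)
    (h : ∀ x, (∀ i ∈ s, 0 ≤ a i x) → 0 ≤ c x) : c ∈ hull 𝕜 (a '' s) := by
  induction s using Finset.cons_induction generalizing a c with
  | empty =>
    have hc : c = 0 := by
      ext x
      have hneg : 0 ≤ c (-x) := h (-x) (by simp)
      exact le_antisymm (by simpa using hneg) (h x (by simp))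
    exact hc ▸ zero_mem _
  | cons j s hj ih =>
    simp only [Finset.forall_mem_cons, and_imp] at h
    rw [Finset.coe_cons, Set.image_insert_eq]
    by_cases hdrop : ∀ x, (∀ i ∈ s, 0 ≤ a i x) → 0 ≤ c x
    · exact Submodule.span_mono (Set.subset_insert _ _) (ih a c hdrop)
    push Not at hdrop
    obtain ⟨x₀, hs, hc⟩ := hdrop
    have hj : a j x₀ < 0 := not_le.1 fun hj => (h x₀ hj hs).not_gt hc
    let T := (scaledKerProj (a j) x₀).dualMap
    have hT : T c ∈ hull 𝕜 ((T ∘ a) '' s) :=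
      ih (T ∘ a) (T c) fun x hx => h _ (apply_scaledKerProj_self (a j) x₀ x).ge hx
    rw [Set.image_comp] at hT
    exact mem_hull_insert_of_dualMap_mem_hull (Set.forall_mem_image.2 hs) hj hc.le hT

theorem farkas_forall_nonneg_iff [Fintype ι] (a : ι → Dual 𝕜 V) (c : Dual 𝕜 V) :
    (∀ x, (∀ i, 0 ≤ a i x) → 0 ≤ c x) ↔ ∃ l : ι → 𝕜, 0 ≤ l ∧ ∑ i, l i • a i = c := by
  rw [← mem_hull_range_iff_exists_nonneg (R := 𝕜) (a := a)]
  constructor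
  · intro h
    simpa using mem_hull_image_of_forall_nonneg a Finset.univ c (by simpa using h)
  · exact fun hc x hx => apply_nonneg_of_mem_hull (Set.forall_mem_range.2 hx) hc

theorem nonpos_of_forall_nonneg_add_mul_le {r s β : 𝕜} (h : ∀ t, 0 ≤ t → r + t * s ≤ β) :
    s ≤ 0 := by
  by_contra! hs
  have hr : r ≤ β := by simpa using h 0 le_rfl
  -- At this `t` the left-hand side equals `β + 1`.
  have ht := h ((β - r + 1) / s) (div_nonneg (by linarith) hs.le)
  rw [div_mul_cancel₀ _ hs.ne'] at ht
  linarith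

theorem apply_nonpos_of_forall_le {a : ι → Dual 𝕜 V} {b : ι → 𝕜} {c : Dual 𝕜 V} {β : 𝕜}
    (hP : ∃ x, ∀ i, a i x ≤ b i) (h : ∀ x, (∀ i, a i x ≤ b i) → c x ≤ β) {y : V}
    (hy : ∀ i, a i y ≤ 0) : c y ≤ 0 := by
  obtain ⟨x, hx⟩ := hP
  refine nonpos_of_forall_nonneg_add_mul_le (r := c x) (β := β) fun t ht => ?_
  have hray : ∀ i, a i (x + t • y) ≤ b i := fun i => by
    simpa using add_le_add (hx i) (mul_nonpos_of_nonneg_of_nonpos ht (hy i))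
  simpa using h _ hray

theorem homogenize_nonneg_of_forall_le {a : ι → Dual 𝕜 V} {b : ι → 𝕜} {c : Dual 𝕜 V} {β : 𝕜}
    (hP : ∃ x, ∀ i, a i x ≤ b i) (h : ∀ x, (∀ i, a i x ≤ b i) → c x ≤ β) {z : V × 𝕜}
    (hz : 0 ≤ z.2) (hab : ∀ i, 0 ≤ homogenize (a i) (b i) z) : 0 ≤ homogenize c β z := by
  obtain ⟨x, t⟩ := z
  simp only [homogenize_apply, sub_nonneg] at hz hab ⊢
  obtain rfl | ht := hz.eq_or_lt
  · simp only [mul_zero] at hab ⊢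
    exact apply_nonpos_of_forall_le hP h hab
  · have hscaled : c (t⁻¹ • x) ≤ β := h _ fun i => by
      simpa [inv_mul_le_iff₀ ht, mul_comm] using hab i
    simpa [inv_mul_le_iff₀ ht, mul_comm] using hscaled

theorem farkas_forall_le_iff [Fintype ι] {a : ι → Dual 𝕜 V} {b : ι → 𝕜} {c : Dual 𝕜 V} {β : 𝕜}
    (hP : ∃ x, ∀ i, a i x ≤ b i) :
    (∀ x, (∀ i, a i x ≤ b i) → c x ≤ β) ↔
      ∃ l : ι → 𝕜, 0 ≤ l ∧ ∑ i, l i • a i = c ∧ b ⬝ᵥ l ≤ β := by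
  constructor
  · intro h
    let constraint : Option ι → Dual 𝕜 (V × 𝕜) :=
      fun o => o.elim (LinearMap.snd 𝕜 V 𝕜) fun i => homogenize (a i) (b i)
    obtain ⟨l, hl, hsum⟩ := (farkas_forall_nonneg_iff constraint (homogenize c β)).1 fun z hz =>
      homogenize_nonneg_of_forall_le hP h (hz none) fun i => hz (some i)
    have hcomb (x : V) (t : 𝕜) :
        l none * t + ∑ i, l (some i) * (b i * t - a i x) = β * t - c x := by
      simpa [constraint, Fintype.sum_option] using LinearMap.congr_fun hsum (x, t)
    refine ⟨fun i => l (some i), fun i => hl (some i), ?_, ?_⟩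
    · ext x
      simpa using hcomb x 0
    · have hslack : l none + (fun i => l (some i)) ⬝ᵥ b = β := by
        simpa [dotProduct] using hcomb 0 1
      rw [dotProduct_comm, ← hslack]
      exact le_add_of_nonneg_left (hl none)
  · rintro ⟨l, hl, rfl, hβ⟩ x hx
    calc (∑ i, l i • a i) x = l ⬝ᵥ fun i => a i x := by simp [dotProduct]
      _ ≤ l ⬝ᵥ b := dotProduct_le_dotProduct_of_nonneg_left hx hl
      _ = b ⬝ᵥ l := dotProduct_comm l b
      _ ≤ β := hβ

end Farkas

section Matrix

variable {𝕜 : Type*} [Field 𝕜] [LinearOrder 𝕜] [IsStrictOrderedRing 𝕜]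
variable {m n p : Type*} [Fintype m] [Fintype n] [Fintype p]

theorem farkas_mulVec_le_iff {A : Matrix m n 𝕜} {b : m → 𝕜} (hP : ∃ d, A *ᵥ d ≤ b)
    {w : n → 𝕜} {β : 𝕜} :
    (∀ d, A *ᵥ d ≤ b → w ⬝ᵥ d ≤ β) ↔ ∃ l : m → 𝕜, 0 ≤ l ∧ Aᵀ *ᵥ l = w ∧ b ⬝ᵥ l ≤ β := by
  let row (i : m) : Module.Dual 𝕜 (n → 𝕜) := dotProductBilin 𝕜 𝕜 (A i)
  have hcomb (l : m → 𝕜) : ∑ i, l i • row i = dotProductBilin 𝕜 𝕜 w ↔ Aᵀ *ᵥ l = w := by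
    rw [LinearMap.ext_iff, ← dotProduct_eq_iff]
    refine forall_congr' fun d => ?_
    rw [dotProduct_comm (Aᵀ *ᵥ l), dotProduct_transpose_mulVec, LinearMap.sum_apply]
    rfl
  simp only [← hcomb]
  exact farkas_forall_le_iff (a := row) (c := dotProductBilin 𝕜 𝕜 w) hP

theorem aarc_constraint_iff_dual_general {A : Matrix m n 𝕜} {b : m → 𝕜}
    (hP : ∃ d, A *ᵥ d ≤ b) (η₀ : p → 𝕜) (H : Matrix p n 𝕜) (u : p → 𝕜) (v : n → 𝕜) (h : 𝕜) :
    (∀ d, A *ᵥ d ≤ b → u ⬝ᵥ (η₀ + H *ᵥ d) + v ⬝ᵥ d ≤ h) ↔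
      ∃ l : m → 𝕜, 0 ≤ l ∧ Aᵀ *ᵥ l = Hᵀ *ᵥ u + v ∧ u ⬝ᵥ η₀ + b ⬝ᵥ l ≤ h := by
  have hobjective (d : n → 𝕜) :
      u ⬝ᵥ (η₀ + H *ᵥ d) + v ⬝ᵥ d = u ⬝ᵥ η₀ + (Hᵀ *ᵥ u + v) ⬝ᵥ d := by
    rw [dotProduct_add, add_dotProduct, dotProduct_comm (Hᵀ *ᵥ u), dotProduct_transpose_mulVec,
      add_assoc]
  simp only [hobjective, ← le_sub_iff_add_le']
  exact farkas_mulVec_le_iff hP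

end Matrix

/-- Per-constraint AARC reformulation (Theorem 1 of the paper): under affine decision
rules `f = η₀ + H ⬝ d`, the robust constraint `u ⬝ᵥ (η₀ + H ⬝ d) + v ⬝ᵥ d ≤ h` over the
nonempty polyhedron `{d : A ⬝ d ≤ b}` holds iff there is `lam ≥ 0` with
`Aᵀ ⬝ lam = Hᵀ ⬝ u + v` and `u ⬝ᵥ η₀ + b ⬝ᵥ lam ≤ h`. -/
theorem aarc_constraint_iff_dual (m n p : ℕ) (A : Matrix (Fin m) (Fin n) ℝ)
    (b : Fin m → ℝ) (hP : ∃ d : Fin n → ℝ, A.mulVec d ≤ b)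
    (η₀ : Fin p → ℝ) (H : Matrix (Fin p) (Fin n) ℝ)
    (u : Fin p → ℝ) (v : Fin n → ℝ) (h : ℝ) :
    (∀ d : Fin n → ℝ, A.mulVec d ≤ b → u ⬝ᵥ (η₀ + H.mulVec d) + v ⬝ᵥ d ≤ h) ↔
      ∃ lam : Fin m → ℝ, 0 ≤ lam ∧ Aᵀ.mulVec lam = Hᵀ.mulVec u + v ∧
        u ⬝ᵥ η₀ + b ⬝ᵥ lam ≤ h :=
  aarc_constraint_iff_dual_general hP η₀ H u v h
end

section
/- Let A be a real m×n matrix and b ∈ ℝ^m such that the polyhedron P = {d ∈ ℝ^n : A·d ≤ b} is nonempty. Let F be a real q×p matrix, G a real q×n matrix, h ∈ ℝ^q and x ∈ ℝ^p. Then the system of uncertain constraints F·x + G·d ≤ h (componentwise) holds for every d ∈ P if and only if there exists a q×m matrix Λ with all entries nonnegative such that Λ·A = G and F·x + Λ·b ≤ h (componentwise). Consequently, robust (semi-infinite) feasibility of a finite system of affine constraints under polyhedral uncertainty is equivalent to feasibility of a finite system of linear constraints in (x, Λ). -/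
/-!
The constraints decouple row by row, and for a single row the theorem is the affine Farkas lemma:
an inequality valid on a nonempty polyhedron is a nonnegative combination of the defining
inequalities, up to weakening its right-hand side. Homogenizing with one extra coordinate `t ≥ 0`
reduces this to the conic Farkas lemma; on the hyperplane `t = 0` one needs that a functional
bounded above on a nonempty polyhedron is nonpositive on its recession cone. The conic lemma is
proved by eliminating one functional at a time through a projection onto its kernel, an argument
that needs no topology and so works over every linearly ordered field.
-/

open Matrix

section Farkas

open Module PointedCone

section CommRing

variable {R V ι : Type*} [CommRing R] [AddCommGroup V] [Module R V]

theorem apply_nonneg_of_mem_hull_s4 [PartialOrder R] [IsOrderedRing R] {s : Set (Dual R V)}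
    {f : Dual R V} (hf : f ∈ hull R s) {v : V} (hv : ∀ a ∈ s, 0 ≤ a v) : 0 ≤ f v := by
  have hv_dual : v ∈ dual .id (hull R s : Set (Dual R V)) := by rwa [dual_hull]
  exact hv_dual hf

theorem exists_nonneg_sum_eq_of_mem_hull_range [PartialOrder R] [IsOrderedRing R] [Fintype ι]
    {v : ι → V} {x : V} (hx : x ∈ hull R (Set.range v)) :
    ∃ l : ι → R, 0 ≤ l ∧ ∑ i, l i • v i = x := by
  obtain ⟨l, hl⟩ := (Submodule.mem_span_range_iff_exists_fun _).1 hx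
  exact ⟨fun i ↦ l i, fun i ↦ (l i).2, hl⟩

theorem apply_transvection_eq_zero {f : Dual R V} {w : V} (hw : f w = -1) (v : V) :
    f (LinearMap.transvection f w v) = 0 := by
  simp [LinearMap.transvection.apply, hw]

theorem dualMap_transvection (f g : Dual R V) (w : V) :
    (LinearMap.transvection f w).dualMap g = g + g w • f := by
  ext v
  simp [LinearMap.transvection.apply, mul_comm]

/-- The homogenized slack `(v, t) ↦ r * t - f v` of the inequality `f v ≤ r`; the slack `r - f v`
itself is its value at `t = 1`. -/
def homogenizedSlack (f : Dual R V) (r : R) : Dual R (V × R) :=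
  r • LinearMap.snd R V R - f ∘ₗ LinearMap.fst R V R

@[simp]
theorem homogenizedSlack_apply (f : Dual R V) (r : R) (z : V × R) :
    homogenizedSlack f r z = r * z.2 - f z.1 := rfl

end CommRing

section Field

variable {R V ι : Type*} [Field R] [LinearOrder R] [IsStrictOrderedRing R]
  [AddCommGroup V] [Module R V]

theorem exists_apply_eq_neg_one_of_not_forall_nonneg {s : Set ι} {j : ι} {a : ι → Dual R V}
    {g : Dual R V} (hg : ∀ v, (∀ i ∈ insert j s, 0 ≤ a i v) → 0 ≤ g v)
    (hs : ¬∀ v, (∀ i ∈ s, 0 ≤ a i v) → 0 ≤ g v) :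
    ∃ w, a j w = -1 ∧ (∀ i ∈ s, 0 ≤ a i w) ∧ g w < 0 := by
  push Not at hs
  obtain ⟨v, hv, hgv⟩ := hs
  have hjv : a j v < 0 := by
    contrapose! hgv
    exact hg v (Set.forall_mem_insert.2 ⟨hgv, hv⟩)
  have hpos : 0 < -(a j v)⁻¹ := neg_pos.2 (inv_lt_zero.2 hjv)
  refine ⟨-(a j v)⁻¹ • v, ?_, fun i hi ↦ ?_, ?_⟩
  · simp [hjv.ne]
  · simpa only [map_smul] using smul_nonneg hpos.le (hv i hi)
  · simpa only [map_smul] using smul_neg_of_pos_of_neg hpos hgv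

theorem mem_hull_image_of_forall_nonneg_s4 {s : Set ι} (hs : s.Finite) (a : ι → Dual R V)
    (g : Dual R V) (hg : ∀ v, (∀ i ∈ s, 0 ≤ a i v) → 0 ≤ g v) : g ∈ hull R (a '' s) := by
  induction s, hs using Set.Finite.induction_on generalizing a g with
  | empty =>
    have hg_zero : g = 0 := by
      ext v
      have hneg := hg (-v) (by simp)
      rw [map_neg, neg_nonneg] at hneg
      exact hneg.antisymm (hg v (by simp))
    exact hg_zero ▸ zero_mem _
  | @insert j s _ _ ih =>
    have hmono : hull R (a '' s) ≤ hull R (a '' insert j s) :=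
      Submodule.span_mono (Set.image_mono (Set.subset_insert j s))
    by_cases hredundant : ∀ v, (∀ i ∈ s, 0 ≤ a i v) → 0 ≤ g v
    · exact hmono (ih a g hredundant)
    obtain ⟨w, hjw, hsw, hgw⟩ := exists_apply_eq_neg_one_of_not_forall_nonneg hg hredundant
    -- As `a j w = -1`, this transvection is the projection onto `ker (a j)` along `w`.
    let π := LinearMap.transvection (a j) w
    have hproj : π.dualMap g ∈ hull R ((fun i ↦ π.dualMap (a i)) '' s) :=
      ih _ _ fun v hv ↦ hg (π v)
        (Set.forall_mem_insert.2 ⟨(apply_transvection_eq_zero hjw v).ge, hv⟩)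
    obtain ⟨f, hf : f ∈ hull R (a '' s), hfg : π.dualMap f = π.dualMap g⟩ :
        π.dualMap g ∈ (hull R (a '' s)).map π.dualMap := by
      rw [PointedCone.map, Submodule.map_span]
      rwa [← Set.image_image] at hproj
    have hfw : 0 ≤ f w := apply_nonneg_of_mem_hull_s4 hf (Set.forall_mem_image.2 hsw)
    have hg_eq : g = f + (f w - g w) • a j := by
      simp only [π, dualMap_transvection] at hfg
      linear_combination (norm := module) -hfg
    have hj : a j ∈ hull R (a '' insert j s) :=
      subset_hull (Set.mem_image_of_mem a (Set.mem_insert j s))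
    rw [hg_eq]
    exact add_mem (hmono hf) (Submodule.smul_mem _ ⟨f w - g w, by linarith⟩ hj)

theorem nonpos_of_forall_add_mul_le {r s c : R} (h : ∀ t, 0 ≤ t → r + t * s ≤ c) : s ≤ 0 := by
  by_contra! hs
  have hr : r ≤ c := by simpa using h 0 le_rfl
  have hviolated := h ((c + 1 - r) / s) (div_nonneg (by linarith) hs.le)
  rw [div_mul_cancel₀ _ hs.ne'] at hviolated
  linarith

theorem apply_nonpos_of_recession {a : ι → Dual R V} {b : ι → R} {g : Dual R V} {c : R}
    (hne : ∃ v, ∀ i, a i v ≤ b i) (hg : ∀ v, (∀ i, a i v ≤ b i) → g v ≤ c) {u : V}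
    (hu : ∀ i, a i u ≤ 0) : g u ≤ 0 := by
  obtain ⟨v, hv⟩ := hne
  refine nonpos_of_forall_add_mul_le (r := g v) (c := c) fun t ht ↦ ?_
  have hray : g (v + t • u) ≤ c := hg _ fun i ↦ by
    rw [map_add, map_smul, smul_eq_mul]
    exact add_le_of_le_of_nonpos (hv i) (mul_nonpos_of_nonneg_of_nonpos ht (hu i))
  simpa only [map_add, map_smul, smul_eq_mul] using hray

theorem homogenizedSlack_nonneg {a : ι → Dual R V} {b : ι → R} {g : Dual R V} {c : R}
    (hne : ∃ v, ∀ i, a i v ≤ b i) (hg : ∀ v, (∀ i, a i v ≤ b i) → g v ≤ c) {z : V × R}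
    (hz : 0 ≤ z.2) (haz : ∀ i, 0 ≤ homogenizedSlack (a i) (b i) z) :
    0 ≤ homogenizedSlack g c z := by
  obtain ⟨v, t⟩ := z
  simp only [homogenizedSlack_apply, sub_nonneg] at hz haz ⊢
  obtain rfl | ht := hz.eq_or_lt
  · simp only [mul_zero] at haz ⊢
    exact apply_nonpos_of_recession hne hg haz
  · have hscaled : g (t⁻¹ • v) ≤ c := hg _ fun i ↦ by
      rw [map_smul, smul_eq_mul, inv_mul_le_iff₀' ht]
      exact haz i
    rwa [map_smul, smul_eq_mul, inv_mul_le_iff₀' ht] at hscaled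

theorem exists_nonneg_combination_of_forall_le [Fintype ι] {a : ι → Dual R V} {b : ι → R}
    {g : Dual R V} {c : R} (hne : ∃ v, ∀ i, a i v ≤ b i)
    (hg : ∀ v, (∀ i, a i v ≤ b i) → g v ≤ c) :
    ∃ l : ι → R, 0 ≤ l ∧ ∑ i, l i • a i = g ∧ ∑ i, l i * b i ≤ c := by
  let S : ι → Dual R (V × R) := fun i ↦ homogenizedSlack (a i) (b i)
  have hmem : homogenizedSlack g c ∈ hull R (insert (LinearMap.snd R V R) (Set.range S)) := by
    rw [← Set.image_id (insert _ _)]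
    refine mem_hull_image_of_forall_nonneg_s4 ((Set.finite_range S).insert _) id _ fun z hz ↦ ?_
    obtain ⟨hsnd, hS⟩ := Set.forall_mem_insert.1 hz
    exact homogenizedSlack_nonneg hne hg hsnd fun i ↦ hS _ (Set.mem_range_self i)
  obtain ⟨⟨r, hr⟩, _, hf, hcomb⟩ := Submodule.mem_span_insert.1 hmem
  obtain ⟨l, hl, rfl⟩ := exists_nonneg_sum_eq_of_mem_hull_range hf
  have heval (v : V) (t : R) : c * t - g v = r * t + ∑ i, l i * (b i * t - a i v) := by
    simpa [S, Nonneg.mk_smul] using DFunLike.congr_fun hcomb (v, t)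
  refine ⟨l, hl, ?_, ?_⟩
  · ext v
    simpa [eq_comm] using heval v 0
  · have hc : c = r + ∑ i, l i * b i := by simpa using heval 0 1
    linarith

end Field

end Farkas

section Robust

variable {R m n p q : Type*} [Field R] [LinearOrder R] [IsStrictOrderedRing R]
  [Fintype m] [Fintype n]

theorem forall_dotProduct_le_iff_exists_nonneg {A : Matrix m n R} {b : m → R}
    (hP : ∃ d, A *ᵥ d ≤ b) (g : n → R) (c : R) :
    (∀ d, A *ᵥ d ≤ b → g ⬝ᵥ d ≤ c) ↔ ∃ l : m → R, 0 ≤ l ∧ l ᵥ* A = g ∧ l ⬝ᵥ b ≤ c := by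
  classical
  constructor
  · intro hg
    obtain ⟨l, hl, hlA, hlb⟩ := exists_nonneg_combination_of_forall_le
      (a := fun i ↦ dotProductEquiv R n (A i)) (g := dotProductEquiv R n g) hP hg
    refine ⟨l, hl, (dotProductEquiv R n).injective ?_, hlb⟩
    simpa only [vecMul_eq_sum, map_sum, map_smul] using hlA
  · rintro ⟨l, hl, rfl, hlb⟩ d hd
    calc (l ᵥ* A) ⬝ᵥ d = l ⬝ᵥ A *ᵥ d := (dotProduct_mulVec l A d).symm
      _ ≤ l ⬝ᵥ b := dotProduct_le_dotProduct_of_nonneg_left hd hl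
      _ ≤ c := hlb

theorem robust_system_iff_dual_general [Fintype p] (A : Matrix m n R) (b : m → R)
    (hP : ∃ d, A *ᵥ d ≤ b) (F : Matrix q p R) (G : Matrix q n R) (h : q → R) (x : p → R) :
    (∀ d, A *ᵥ d ≤ b → F *ᵥ x + G *ᵥ d ≤ h) ↔
      ∃ L : Matrix q m R, (∀ i j, 0 ≤ L i j) ∧ L * A = G ∧ F *ᵥ x + L *ᵥ b ≤ h := by
  calc (∀ d, A *ᵥ d ≤ b → F *ᵥ x + G *ᵥ d ≤ h)
      ↔ ∀ i, ∀ d, A *ᵥ d ≤ b → G i ⬝ᵥ d ≤ h i - (F *ᵥ x) i := by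
        simp only [le_sub_iff_add_le']
        exact ⟨fun H i d hd ↦ H d hd i, fun H d hd i ↦ H i d hd⟩
    _ ↔ ∀ i, ∃ l : m → R, 0 ≤ l ∧ l ᵥ* A = G i ∧ l ⬝ᵥ b ≤ h i - (F *ᵥ x) i :=
        forall_congr' fun i ↦ forall_dotProduct_le_iff_exists_nonneg hP (G i) _
    _ ↔ ∃ L : Matrix q m R, ∀ i, 0 ≤ L i ∧ L i ᵥ* A = G i ∧ L i ⬝ᵥ b ≤ h i - (F *ᵥ x) i :=
        Classical.skolem
    _ ↔ ∃ L : Matrix q m R, (∀ i j, 0 ≤ L i j) ∧ L * A = G ∧ F *ᵥ x + L *ᵥ b ≤ h := by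
        simp only [forall_and, le_sub_iff_add_le']
        exact exists_congr fun L ↦ and_congr Iff.rfl (and_congr funext_iff.symm Iff.rfl)

end Robust

/-- Generic content of Theorem 1: robust feasibility of the finite affine system
`F ⬝ x + G ⬝ d ≤ h` for all `d` in the nonempty polyhedron `{d : A ⬝ d ≤ b}` is
equivalent to the existence of a nonnegative multiplier matrix `L` with `L * A = G`
and `F ⬝ x + L ⬝ b ≤ h`, i.e. a finite system of linear constraints in `(x, L)`. -/
theorem robust_system_iff_dual (m n p q : ℕ) (A : Matrix (Fin m) (Fin n) ℝ)
    (b : Fin m → ℝ) (hP : ∃ d : Fin n → ℝ, A.mulVec d ≤ b)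
    (F : Matrix (Fin q) (Fin p) ℝ) (G : Matrix (Fin q) (Fin n) ℝ)
    (h : Fin q → ℝ) (x : Fin p → ℝ) :
    (∀ d : Fin n → ℝ, A.mulVec d ≤ b → F.mulVec x + G.mulVec d ≤ h) ↔
      ∃ L : Matrix (Fin q) (Fin m) ℝ, (∀ i j, 0 ≤ L i j) ∧ L * A = G ∧
        F.mulVec x + L.mulVec b ≤ h :=
  robust_system_iff_dual_general A b hP F G h x
end
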